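/- arXiv:2306.12378 — 2 statements merged into one kernel-verified Lean document; each statement's English description precedes it below -/
import Mathlib

section
/- (Wiener–Lévy theorem for the Hartley transform) Let φ ∈ L¹(ℝ). Then 1 + (H₁ φ)(y) ≠ 0 for all y ∈ ℝ if and only if there exists ℓ ∈ L¹(ℝ) such that (H₁ ℓ)(y) = (H₁ φ)(y)/(1 + (H₁ φ)(y)) for all y ∈ ℝ. -/
open MeasureTheory Real Complex Filter Topology

noncomputable def hartley (f : ℝ → ℂ) (y : ℝ) : ℂ :=
  (1 / Real.sqrt (2 * Real.pi)) *
    ∫ x : ℝ, f x * ((Real.cos (x * y) + Real.sin (x * y) : ℝ) : ℂ)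

namespace WL

noncomputable abbrev E := Lp ℂ 1 (volume : Measure ℝ)

theorem char_exp (e : ℝ → ℂ) (he : Continuous e) (hadd : ∀ a b, e (a + b) = e a * e b)
    (h0 : e 0 = 1) (M : ℝ) (hM : ∀ a, ‖e a‖ ≤ M) :
    ∃ ω : ℝ, ∀ a : ℝ, e a = cexp (-(ω * a) * I) := by
  set P : ℝ → ℂ := fun x => ∫ t in (0 : ℝ)..x, e t with hP
  have hPd : ∀ x, HasDerivAt P (e x) x := fun x =>
    intervalIntegral.integral_hasDerivAt_right (he.intervalIntegrable _ _)
      (he.stronglyMeasurableAtFilter _ _) he.continuousAt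
  obtain ⟨δ, hδ⟩ : ∃ δ, P δ ≠ 0 := by
    by_contra! h
    have h1 : P = fun _ => 0 := funext h
    have h2 := hPd 0
    rw [h1, h0] at h2
    exact one_ne_zero (h2.unique (hasDerivAt_const _ _))
  have key : ∀ x, e x = (P (x + δ) - P x) / P δ := by
    intro x
    rw [eq_div_iff hδ]
    have h1 : P (x + δ) - P x = ∫ t in x..(x + δ), e t :=
      intervalIntegral.integral_interval_sub_left (he.intervalIntegrable _ _)
        (he.intervalIntegrable _ _)
    have h2 : ∫ t in x..(x + δ), e t = ∫ t in (0 : ℝ)..δ, e (x + t) := by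
      rw [intervalIntegral.integral_comp_add_left]; simp
    rw [h1, h2]
    simp_rw [hadd]
    rw [intervalIntegral.integral_const_mul]
  set c : ℂ := (e δ - 1) / P δ with hc
  have hed : ∀ x, HasDerivAt e (c * e x) x := by
    intro x
    have h1 : HasDerivAt (fun x => (P (x + δ) - P x) / P δ) ((e (x + δ) - e x) / P δ) x :=
      (((hPd (x + δ)).comp_add_const x δ).sub (hPd x)).div_const _
    have h2 : (fun x => (P (x + δ) - P x) / P δ) = e := (funext key).symm
    rw [h2] at h1
    convert h1 using 1
    rw [hadd, hc]; ring
  have hexp : ∀ x : ℝ, e x = cexp (c * x) := by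
    intro x
    have hd : ∀ x : ℝ, HasDerivAt (fun x : ℝ => e x * cexp (-c * x)) 0 x := by
      intro x
      have h3 : HasDerivAt (fun x : ℝ => cexp (-c * x)) (cexp (-c * x) * (-c * 1)) x :=
        ((Complex.ofRealCLM.hasDerivAt (x := x)).const_mul (-c)).cexp
      refine ((hed x).mul h3).congr_deriv ?_
      ring
    have h4 := is_const_of_deriv_eq_zero (fun x => (hd x).differentiableAt)
      (fun x => (hd x).deriv) x 0
    simp [h0, Complex.exp_neg] at h4
    field_simp at h4
    exact h4
  have hre : c.re = 0 := by
    by_contra hne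
    have h5 := hM (M / c.re)
    rw [hexp, Complex.norm_exp] at h5
    have : (c * ((M / c.re : ℝ) : ℂ)).re = M := by
      rw [Complex.re_mul_ofReal]; field_simp
    rw [this] at h5
    linarith [Real.add_one_le_exp M]
  refine ⟨-c.im, fun a => ?_⟩
  rw [hexp a]
  congr 1
  apply Complex.ext <;> simp [hre]

theorem exists_char {B : Type*} [NormedRing B] [NormedAlgebra ℂ B] [CompleteSpace B]
    (A : Subalgebra ℂ B) (hA : IsClosed (A : Set B)) (hcomm : ∀ x y : A, x * y = y * x)
    (T : A) (hT : ¬ IsUnit T) :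
    ∃ χ : A →ₐ[ℂ] ℂ, Continuous χ ∧ χ T = 0 ∧ ∃ K : ℝ, ∀ x : A, ‖χ x‖ ≤ K * ‖x‖ := by
  letI : NormedCommRing A := { (inferInstance : NormedRing A) with mul_comm := hcomm }
  haveI : CompleteSpace A := hA.completeSpace_coe
  obtain ⟨f, hf⟩ := WeakDual.CharacterSpace.exists_apply_eq_zero hT
  let χ : A →ₐ[ℂ] ℂ := WeakDual.CharacterSpace.toAlgHom f
  refine ⟨χ, map_continuous f, hf, ‖(1 : A)‖, fun x => ?_⟩
  rw [mul_comm]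
  exact AlgHom.norm_apply_le_self_mul_norm_one χ x

noncomputable def trn (a : ℝ) : E →L[ℂ] E :=
  (Lp.compMeasurePreservingₗᵢ ℂ (fun x => x - a)
    (measurePreserving_sub_right volume a)).toContinuousLinearMap

theorem trn_coe (a : ℝ) (g : E) : trn a g =ᵐ[volume] fun x => g (x - a) :=
  Lp.coeFn_compMeasurePreserving g (measurePreserving_sub_right volume a)

theorem norm_trn (a : ℝ) (g : E) : ‖trn a g‖ = ‖g‖ :=
  Lp.norm_compMeasurePreserving g (measurePreserving_sub_right volume a)

theorem trn_trn (a b : ℝ) (g : E) : trn a (trn b g) = trn (a + b) g := by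
  apply Lp.ext
  have h1 := trn_coe a (trn b g)
  have h2 := trn_coe (a + b) g
  have h3 := (measurePreserving_sub_right volume a).quasiMeasurePreserving.ae (trn_coe b g)
  filter_upwards [h1, h2, h3] with x h1 h2 h3
  rw [h1, h2, h3]
  congr 1; ring

theorem trn_zero : trn 0 = 1 := by
  ext1 g
  apply Lp.ext
  filter_upwards [trn_coe 0 g] with x h
  rw [h]; simp

theorem trn_cont (g : E) : Continuous fun a => trn a g := by
  have hc : Continuous (fun p : ℝ × ℝ => p.2 - p.1) := by fun_prop
  let G : C(ℝ, C(ℝ, ℝ)) := ContinuousMap.curry ⟨_, hc⟩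
  exact (continuous_const (y := g)).compMeasurePreservingLp G.continuous
    (fun a => measurePreserving_sub_right volume a) (by simp)

theorem int_smul {F : Type*} [NormedAddCommGroup F] [NormedSpace ℂ F] {f : ℝ → ℂ}
    (hf : Integrable f) {G : ℝ → F} (hG : Continuous G) (C : ℝ) (hC : ∀ a, ‖G a‖ ≤ C) :
    Integrable fun a => f a • G a := by
  refine (hf.norm.mul_const C).mono' (hf.1.smul hG.aestronglyMeasurable) ?_
  refine Eventually.of_forall fun a => ?_
  rw [norm_smul]
  exact mul_le_mul_of_nonneg_left (hC a) (norm_nonneg _)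

theorem int_trn (f g : E) : Integrable fun a => f a • trn a g :=
  int_smul (L1.integrable_coeFn f) (trn_cont g) ‖g‖ fun a => (norm_trn a g).le

noncomputable def cnv (f : E) : E →L[ℂ] E :=
  LinearMap.mkContinuous
    { toFun := fun g => ∫ a, f a • trn a g
      map_add' := fun g h => by
        simp only [map_add, smul_add]
        exact integral_add (int_trn f g) (int_trn f h)
      map_smul' := fun c g => by
        simp only [map_smul, RingHom.id_apply]
        rw [← integral_smul]
        simp only [smul_comm c] } ‖f‖ (fun g => by
      refine (norm_integral_le_integral_norm _).trans ?_
      simp only [norm_smul, norm_trn]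
      rw [integral_mul_const, L1.norm_eq_integral_norm f])

theorem cnv_apply (f g : E) : cnv f g = ∫ a, f a • trn a g := rfl

theorem norm_cnv (f : E) : ‖cnv f‖ ≤ ‖f‖ := LinearMap.mkContinuous_norm_le _ (norm_nonneg _) _

theorem cnv_sub (f f' : E) : cnv (f - f') = cnv f - cnv f' := by
  ext1 g
  rw [sub_apply, cnv_apply, cnv_apply, cnv_apply,
    ← integral_sub (int_trn f g) (int_trn f' g)]
  apply integral_congr_ae
  filter_upwards [Lp.coeFn_sub f f'] with a h
  rw [h, Pi.sub_apply, sub_smul]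

theorem cnv_cont : Continuous cnv := by
  have : LipschitzWith 1 cnv := LipschitzWith.of_dist_le_mul fun f f' => by
    rw [dist_eq_norm, dist_eq_norm, ← cnv_sub]
    simpa using norm_cnv (f - f')
  exact this.continuous

theorem cnv_comm (X : E →L[ℂ] E) (hX : ∀ a, X * trn a = trn a * X) (f : E) :
    X * cnv f = cnv f * X := by
  ext1 g
  change X (cnv f g) = cnv f (X g)
  rw [cnv_apply, cnv_apply, ← X.integral_comp_comm (int_trn f g)]
  congr 1; ext1 a
  rw [map_smul]
  congr 1
  exact congrArg (fun Y : E →L[ℂ] E => Y g) (hX a)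

theorem trn_cnv (a : ℝ) (f : E) : trn a * cnv f = cnv (trn a f) := by
  ext1 g
  change trn a (cnv f g) = _
  rw [cnv_apply, cnv_apply, ← (trn a).integral_comp_comm (int_trn f g)]
  rw [← integral_sub_right_eq_self _ a]
  apply integral_congr_ae
  filter_upwards [trn_coe a f] with b h
  rw [h, map_smul, trn_trn]
  congr 3; ring

noncomputable def FT (f : ℝ → ℂ) (ω : ℝ) : ℂ := ∫ x : ℝ, f x * cexp (-(ω * x) * I)

theorem norm_e (ω x : ℝ) : ‖cexp (-(ω * x) * I)‖ = 1 := by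
  have := Complex.norm_exp_ofReal_mul_I (-(ω * x))
  push_cast at this
  exact this

theorem FT_int {f : ℝ → ℂ} (hf : Integrable f) (ω : ℝ) :
    Integrable fun x : ℝ => f x * cexp (-(ω * x) * I) :=
  int_smul hf (by fun_prop) 1 fun a => (norm_e ω a).le

noncomputable def FL (ω : ℝ) : E →L[ℂ] ℂ :=
  LinearMap.mkContinuous
    { toFun := fun g => FT g ω
      map_add' := fun g h => by
        unfold FT
        rw [← integral_add (FT_int (L1.integrable_coeFn g) ω) (FT_int (L1.integrable_coeFn h) ω)]
        apply integral_congr_ae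
        filter_upwards [Lp.coeFn_add g h] with x hx
        rw [hx, Pi.add_apply, add_mul]
      map_smul' := fun c g => by
        unfold FT
        rw [RingHom.id_apply, ← integral_smul]
        apply integral_congr_ae
        filter_upwards [Lp.coeFn_smul c g] with x hx
        rw [hx, Pi.smul_apply, smul_mul_assoc] } 1 (fun g => by
      refine (norm_integral_le_integral_norm _).trans ?_
      simp only [norm_mul, norm_e]
      simp [L1.norm_eq_integral_norm])

theorem FL_apply (ω : ℝ) (g : E) : FL ω g = FT g ω := rfl

theorem FL_trn (ω a : ℝ) (g : E) : FL ω (trn a g) = cexp (-(ω * a) * I) * FL ω g := by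
  rw [FL_apply, FL_apply, FT, FT, ← integral_const_mul]
  rw [← integral_sub_right_eq_self (fun x : ℝ => cexp (-(ω * a) * I) * (g x * cexp (-(ω * x) * I))) a]
  apply integral_congr_ae
  filter_upwards [trn_coe a g] with x h
  rw [h, mul_left_comm, ← Complex.exp_add]
  congr 2
  push_cast; ring

theorem FL_cnv (ω : ℝ) (f g : E) : FL ω (cnv f g) = FL ω f * FL ω g := by
  rw [cnv_apply, ← (FL ω).integral_comp_comm (int_trn f g), FL_apply ω f, FT, ← integral_mul_const]
  congr 1; ext1 a
  rw [map_smul, FL_trn, smul_eq_mul, mul_assoc]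

theorem wiener_surj (ξ : E) (h : ∀ ω, 1 + FT ξ ω ≠ 0) : ∃ k : E, k + cnv ξ k = ξ := by
  let S : Set (E →L[ℂ] E) := Set.range trn
  let A : Subalgebra ℂ (E →L[ℂ] E) :=
    Subalgebra.centralizer ℂ (Subalgebra.centralizer ℂ S : Set (E →L[ℂ] E))
  have hS : ∀ x ∈ S, ∀ y ∈ S, x * y = y * x := by
    rintro _ ⟨a, rfl⟩ _ ⟨b, rfl⟩
    ext1 g
    change trn a (trn b g) = trn b (trn a g)
    rw [trn_trn, trn_trn, add_comm]
  have hcl : IsClosed (A : Set (E →L[ℂ] E)) := Set.isClosed_centralizer _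
  have hcomm : ∀ x y : A, x * y = y * x := fun x y => Subtype.ext <|
    Set.centralizer_centralizer_comm_of_comm hS _ x.2 _ y.2
  have htA : ∀ a, trn a ∈ A := fun a X hX => (hX _ ⟨a, rfl⟩).symm
  have hcA : ∀ f, cnv f ∈ A := fun f X hX =>
    cnv_comm X (fun a => (hX _ ⟨a, rfl⟩).symm) f
  let t : ℝ → A := fun a => ⟨trn a, htA a⟩
  let C : E → A := fun f => ⟨cnv f, hcA f⟩
  have hC : Continuous C := cnv_cont.subtype_mk _
  have htC : ∀ a f, t a * C f = C (trn a f) := fun a f => Subtype.ext (trn_cnv a f)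
  by_cases hu : IsUnit (1 + C ξ)
  · obtain ⟨R, hR⟩ := hu.exists_right_inv
    refine ⟨(R : E →L[ℂ] E) ξ, ?_⟩
    have := congrArg (fun X : A => (X : E →L[ℂ] E) ξ) hR
    simpa using this
  · exfalso
    obtain ⟨χ, hχ, h0, K, hK⟩ := exists_char A hcl hcomm _ hu
    haveI : CompleteSpace A := hcl.completeSpace_coe
    have hξ : χ (C ξ) = -1 := by
      rw [map_add, map_one] at h0
      linear_combination h0
    let e : ℝ → ℂ := fun a => χ (t a)
    have hCt : Continuous fun a => C (trn a ξ) := hC.comp (trn_cont ξ)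
    have heq : ∀ a, χ (C (trn a ξ)) = - e a := fun a => by
      rw [← htC, map_mul, hξ]; simp [e]
    have he : e = fun a => - χ (C (trn a ξ)) := by
      ext a; rw [heq]; simp
    have hec : Continuous e := by
      rw [he]; exact (hχ.comp hCt).neg
    have hK' : ∀ a, ‖e a‖ ≤ |K| := fun a => by
      have h1 : ‖t a‖ ≤ 1 := LinearIsometry.norm_toContinuousLinearMap_le _
      calc ‖e a‖ ≤ K * ‖t a‖ := hK _
        _ ≤ |K| * 1 := mul_le_mul (le_abs_self K) h1 (norm_nonneg _) (abs_nonneg _)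
        _ = |K| := mul_one _
    obtain ⟨ω, hω⟩ := char_exp e hec (fun a b => by
        change χ (t (a + b)) = χ (t a) * χ (t b)
        rw [← map_mul]
        congr 1
        apply Subtype.ext
        ext1 g
        exact (trn_trn a b g).symm) (by
        change χ (t 0) = 1
        rw [← map_one χ]
        congr 1
        exact Subtype.ext trn_zero) _ hK'
    have hint : Integrable fun a => ξ a • C (trn a ξ) := by
      refine int_smul (L1.integrable_coeFn ξ) hCt ‖ξ‖ fun a => ?_
      exact (norm_cnv _).trans (norm_trn a ξ).le
    have hsq : C ξ * C ξ = ∫ a, ξ a • C (trn a ξ) := by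
      apply Subtype.ext
      ext1 g
      let ev : A →L[ℂ] E :=
        (ContinuousLinearMap.apply ℂ E g).comp
          (⟨A.val.toLinearMap, continuous_subtype_val⟩ : A →L[ℂ] (E →L[ℂ] E))
      change cnv ξ (cnv ξ g) = ev (∫ a, ξ a • C (trn a ξ))
      refine Eq.trans ?_ (ev.integral_comp_comm hint)
      rw [cnv_apply]
      congr 1; ext1 a
      rw [map_smul]
      congr 1
      change _ = cnv (trn a ξ) g
      rw [← trn_cnv]; rfl
    let χL : A →L[ℂ] ℂ := ⟨χ.toLinearMap, hχ⟩
    have h1 : χ (C ξ * C ξ) = - FT ξ ω := by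
      rw [hsq]
      change χL _ = _
      refine (χL.integral_comp_comm hint).symm.trans ?_
      rw [FT, ← integral_neg]
      congr 1; ext1 a
      rw [map_smul]
      change ξ a • χ (C (trn a ξ)) = _
      rw [heq, hω, smul_eq_mul, mul_neg]
    rw [map_mul, hξ] at h1
    apply h ω
    linear_combination h1

theorem FT_congr {f g : ℝ → ℂ} (h : f =ᵐ[volume] g) (ω : ℝ) : FT f ω = FT g ω := by
  apply integral_congr_ae
  filter_upwards [h] with x hx
  rw [hx]

theorem wiener (ξ : ℝ → ℂ) (hξ : Integrable ξ) (h : ∀ ω, 1 + FT ξ ω ≠ 0) :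
    ∃ k : ℝ → ℂ, Integrable k ∧ ∀ ω, FT k ω = FT ξ ω / (1 + FT ξ ω) := by
  let x : E := hξ.toL1 ξ
  have hx : ∀ ω, FT x ω = FT ξ ω := FT_congr hξ.coeFn_toL1
  obtain ⟨k, hk⟩ := wiener_surj x (fun ω => by rw [hx]; exact h ω)
  refine ⟨k, L1.integrable_coeFn k, fun ω => ?_⟩
  have := congrArg (FL ω) hk
  rw [map_add, FL_cnv, FL_apply, FL_apply, hx] at this
  rw [eq_div_iff (h ω)]
  linear_combination this

theorem FT_comb {f : ℝ → ℂ} (hf : Integrable f) (p q : ℂ) (y : ℝ) :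
    Integrable (fun x => p * f x + q * f (-x)) := (hf.const_mul p).add (hf.comp_neg.const_mul q)

theorem int_cs {f : ℝ → ℂ} (hf : Integrable f) (u v : ℂ) (y : ℝ) :
    Integrable fun x : ℝ => f x * (u * Real.cos (x * y) + v * Real.sin (x * y)) := by
  refine int_smul hf (G := fun x : ℝ => u * Real.cos (x * y) + v * Real.sin (x * y))
    (by fun_prop) (‖u‖ + ‖v‖) fun a => ?_
  refine (norm_add_le _ _).trans (add_le_add ?_ ?_)
  · rw [norm_mul, Complex.norm_real]
    exact mul_le_of_le_one_right (norm_nonneg _) (Real.abs_cos_le_one _)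
  · rw [norm_mul, Complex.norm_real]
    exact mul_le_of_le_one_right (norm_nonneg _) (Real.abs_sin_le_one _)

theorem int_comb {f : ℝ → ℂ} (hf : Integrable f) (p q u v : ℂ) (y : ℝ) :
    ∫ x : ℝ, (p * f x + q * f (-x)) * (u * Real.cos (x * y) + v * Real.sin (x * y)) =
    ∫ x : ℝ, f x * ((p + q) * u * Real.cos (x * y) + (p - q) * v * Real.sin (x * y)) := by
  have h1 := int_cs hf (p * u) (p * v) y
  have h2 := int_cs hf (q * u) (-(q * v)) y
  have h3 := h2.comp_neg
  rw [← sub_eq_zero]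
  calc _ = (∫ x : ℝ, (f x * (p * u * Real.cos (x * y) + p * v * Real.sin (x * y)) +
        f (-x) * (q * u * Real.cos (-x * y) + -(q * v) * Real.sin (-x * y)))) -
      ∫ x : ℝ, (f x * (p * u * Real.cos (x * y) + p * v * Real.sin (x * y)) +
        f x * (q * u * Real.cos (x * y) + -(q * v) * Real.sin (x * y))) := by
        congr 2
        · ext1 x
          rw [neg_mul, Real.cos_neg, Real.sin_neg]; push_cast; ring
        · ext1 x; ring
    _ = 0 := by
      rw [integral_add h1 h3, integral_add h1 h2,
        integral_neg_eq_self (fun x : ℝ =>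
          f x * (q * u * Real.cos (x * y) + -(q * v) * Real.sin (x * y)))]
      ring

theorem FT_eq (f : ℝ → ℂ) (y : ℝ) :
    FT f y = ∫ x : ℝ, f x * (1 * Real.cos (x * y) + (-I) * Real.sin (x * y)) := by
  unfold FT
  congr 1; ext1 x
  rw [Complex.exp_mul_I]
  push_cast
  rw [Complex.cos_neg, Complex.sin_neg, mul_comm (y : ℂ)]
  ring

theorem hartley_eq (f : ℝ → ℂ) (y : ℝ) : hartley f y = (1 / Real.sqrt (2 * Real.pi)) *
    ∫ x : ℝ, f x * (1 * Real.cos (x * y) + 1 * Real.sin (x * y)) := by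
  unfold hartley
  simp

theorem sq_ne : ((Real.sqrt (2 * Real.pi) : ℝ) : ℂ) ≠ 0 := by
  rw [Complex.ofReal_ne_zero]; positivity

theorem to_FT {f : ℝ → ℂ} (hf : Integrable f) :
    ∃ g : ℝ → ℂ, Integrable g ∧ ∀ y, hartley f y = FT g y := by
  set s : ℂ := 1 / Real.sqrt (2 * Real.pi) with hs
  refine ⟨_, FT_comb hf (s * ((1 + I) / 2)) (s * ((1 - I) / 2)) 0, fun y => ?_⟩
  rw [FT_eq, int_comb hf, hartley_eq, ← hs, ← integral_const_mul]
  congr 1; ext1 x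
  linear_combination (-f x * s * Real.sin (x * y)) * (-Complex.I_sq)

theorem of_FT {f : ℝ → ℂ} (hf : Integrable f) :
    ∃ g : ℝ → ℂ, Integrable g ∧ ∀ y, hartley g y = FT f y := by
  set s : ℂ := ((Real.sqrt (2 * Real.pi) : ℝ) : ℂ) with hs
  have h0 : s ≠ 0 := sq_ne
  refine ⟨_, FT_comb hf (s * ((1 - I) / 2)) (s * ((1 + I) / 2)) 0, fun y => ?_⟩
  rw [hartley_eq, int_comb hf, FT_eq, ← hs, ← integral_const_mul]
  congr 1; ext1 x
  field_simp
  ring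

theorem FT_cont {f : ℝ → ℂ} (hf : Integrable f) : Continuous (FT f) := by
  refine continuous_of_dominated (bound := fun x => ‖f x‖) (fun ω => (FT_int hf ω).1) ?_ hf.norm ?_
  · intro ω
    refine Eventually.of_forall fun x => ?_
    rw [norm_mul, norm_e, mul_one]
  · exact Eventually.of_forall fun x => by fun_prop

theorem FT_tendsto (f : ℝ → ℂ) : Tendsto (FT f) atTop (𝓝 0) := by
  have h1 := (Real.tendsto_integral_exp_smul_cocompact f).mono_left atTop_le_cocompact
  have h2 : Tendsto (fun y : ℝ => y / (2 * Real.pi)) atTop atTop :=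
    tendsto_id.atTop_div_const (by positivity)
  refine (h1.comp h2).congr fun y => ?_
  simp only [Function.comp, FT]
  congr 1; ext1 x
  rw [Circle.smul_def, Real.fourierChar_apply, smul_eq_mul, mul_comm]
  congr 2
  have : (Real.pi : ℂ) ≠ 0 := Complex.ofReal_ne_zero.2 Real.pi_ne_zero
  push_cast
  field_simp

end WL

theorem stmt12 (φ : ℝ → ℂ) (hφ : Integrable φ) :
    (∀ y : ℝ, 1 + hartley φ y ≠ 0) ↔
      ∃ ℓ : ℝ → ℂ, Integrable ℓ ∧
        ∀ y : ℝ, hartley ℓ y = hartley φ y / (1 + hartley φ y) := by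
  obtain ⟨ψ, hψ, hψe⟩ := WL.to_FT hφ
  simp only [hψe]
  constructor
  · intro h
    obtain ⟨k, hk, hke⟩ := WL.wiener ψ hψ h
    obtain ⟨l, hl, hle⟩ := WL.of_FT hk
    exact ⟨l, hl, fun y => by rw [hle, hke]⟩
  · rintro ⟨l, hl, hle⟩
    obtain ⟨k, hk, hke⟩ := WL.to_FT hl
    simp only [hke] at hle
    have c1 := WL.FT_cont hψ
    have c2 := WL.FT_cont hk
    let S : Set ℝ := {y | 1 + WL.FT ψ y ≠ 0}
    have hSo : IsOpen S := isOpen_ne_fun (by fun_prop) (by fun_prop)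
    have hS : S = {y | WL.FT k y * (1 + WL.FT ψ y) = WL.FT ψ y} := by
      ext y
      simp only [S, Set.mem_setOf_eq]
      constructor
      · intro hy
        rw [hle]; field_simp
      · intro hy h0
        rw [h0, mul_zero] at hy
        rw [← hy] at h0
        simp at h0
    have hSc : IsClosed S := by
      rw [hS]; exact isClosed_eq (by fun_prop) (by fun_prop)
    have hne : S.Nonempty := by
      have h1 : Tendsto (fun y => 1 + WL.FT ψ y) atTop (𝓝 (1 + 0)) :=
        (WL.FT_tendsto ψ).const_add 1
      exact (h1.eventually_ne (by simp)).exists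
    have := IsClopen.eq_univ ⟨hSc, hSo⟩ hne
    intro y
    have hy : y ∈ S := this ▸ Set.mem_univ y
    exact hy
end

section
/- Let g ∈ C²(ℝ) ∩ L¹(ℝ) with g', g'' ∈ L¹(ℝ) and g(x) → 0, g'(x) → 0 as |x| → ∞. Then for every f ∈ L¹(ℝ), H₁{(1 − d²/dx²)(f ∗_{H₁} g)(x)}(y) = (1 + y²) H₁(f ∗_{H₁} g)(y) for all y ∈ ℝ. -/
open MeasureTheory Real Complex Filter Topology

noncomputable def Hconv (f g : ℝ → ℂ) (x : ℝ) : ℂ :=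
  (1 / (2 * Real.sqrt (2 * Real.pi))) *
    ∫ y : ℝ, f y * (g (x + y) + g (x - y) + g (-x + y) - g (-x - y))

def KK (k : ℝ → ℂ) (x t : ℝ) : ℂ := k (x + t) + k (x - t) + k (-x + t) - k (-x - t)
def KL (k : ℝ → ℂ) (x t : ℝ) : ℂ := k (x + t) + k (x - t) - k (-x + t) + k (-x - t)

lemma KK_int_prod (f k : ℝ → ℂ) (hf : Integrable f) (hk : Integrable k) :
    Integrable (fun p : ℝ × ℝ => f p.2 * KK k p.1 p.2) (volume.prod volume) := by
  have A : ∀ f k : ℝ → ℂ, Integrable f → Integrable k →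
      Integrable (fun p : ℝ × ℝ => f p.2 * k (p.1 - p.2)) (volume.prod volume) := by
    intro f k hf hk
    exact Integrable.convolution_integrand (ContinuousLinearMap.mul ℝ ℂ) hf hk
  have mp : MeasurePreserving (fun p : ℝ × ℝ => (p.1, -p.2)) (volume.prod volume)
      (volume.prod volume) :=
    (MeasurePreserving.id volume).prod (Measure.measurePreserving_neg volume)
  have B : ∀ f k : ℝ → ℂ, Integrable f → Integrable k →
      Integrable (fun p : ℝ × ℝ => f p.2 * k (p.1 + p.2)) (volume.prod volume) := by
    intro f k hf hk
    have := mp.integrable_comp_of_integrable (A (fun t => f (-t)) k hf.comp_neg hk)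
    refine this.congr (Eventually.of_forall fun p => ?_)
    simp
  have := (((B f k hf hk).add (A f k hf hk)).add (A f (fun t => k (-t)) hf hk.comp_neg)).sub
    (B f (fun t => k (-t)) hf hk.comp_neg)
  refine this.congr (Eventually.of_forall fun p => ?_)
  have e1 : -(p.1 - p.2) = -p.1 + p.2 := by ring
  have e2 : -(p.1 + p.2) = -p.1 - p.2 := by ring
  simp only [KK, Pi.add_apply, Pi.sub_apply, e1, e2]
  ring

lemma KK_cont {k : ℝ → ℂ} (hk : Continuous k) : Continuous (fun p : ℝ × ℝ => KK k p.1 p.2) := by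
  unfold KK; fun_prop
lemma KL_cont {k : ℝ → ℂ} (hk : Continuous k) : Continuous (fun p : ℝ × ℝ => KL k p.1 p.2) := by
  unfold KL; fun_prop

lemma KK_deriv {k : ℝ → ℂ} (hk : Differentiable ℝ k) (x t : ℝ) :
    HasDerivAt (fun x => KK k x t) (KL (deriv k) x t) x := by
  have h : ∀ z, HasDerivAt k (deriv k z) z := fun z => (hk z).hasDerivAt
  have a1 := (h (x + t)).comp_add_const x t
  have a2 := (h (x - t)).comp_sub_const x t
  have a3 := (h (-x + t)).scomp x ((hasDerivAt_neg x).add_const t)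
  have a4 := (h (-x - t)).scomp x ((hasDerivAt_neg x).sub_const t)
  refine HasDerivAt.congr_deriv (((a1.add a2).add a3).sub a4) ?_
  simp [KL]; ring
lemma KL_deriv {k : ℝ → ℂ} (hk : Differentiable ℝ k) (x t : ℝ) :
    HasDerivAt (fun x => KL k x t) (KK (deriv k) x t) x := by
  have h : ∀ z, HasDerivAt k (deriv k z) z := fun z => (hk z).hasDerivAt
  have a1 := (h (x + t)).comp_add_const x t
  have a2 := (h (x - t)).comp_sub_const x t
  have a3 := (h (-x + t)).scomp x ((hasDerivAt_neg x).add_const t)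
  have a4 := (h (-x - t)).scomp x ((hasDerivAt_neg x).sub_const t)
  refine HasDerivAt.congr_deriv (((a1.add a2).sub a3).add a4) ?_
  simp [KK]; ring

lemma KK_int {k : ℝ → ℂ} (hk : Integrable k) (t : ℝ) : Integrable (fun x => KK k x t) := by
  have h3 : Integrable (fun x => k (-x + t)) := by
    have := (hk.comp_add_right t).comp_neg; exact this
  have h4 : Integrable (fun x => k (-x - t)) := by
    have := (hk.comp_sub_right t).comp_neg; exact this
  exact (((hk.comp_add_right t).add (hk.comp_sub_right t)).add h3).sub h4
lemma KL_int {k : ℝ → ℂ} (hk : Integrable k) (t : ℝ) : Integrable (fun x => KL k x t) := by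
  have h3 : Integrable (fun x => k (-x + t)) := by
    have := (hk.comp_add_right t).comp_neg; exact this
  have h4 : Integrable (fun x => k (-x - t)) := by
    have := (hk.comp_sub_right t).comp_neg; exact this
  exact (((hk.comp_add_right t).add (hk.comp_sub_right t)).sub h3).add h4

lemma bdd_of_lim {k : ℝ → ℂ} (hk : Continuous k) (hl : Tendsto k (cocompact ℝ) (nhds 0)) :
    ∃ M, ∀ x, ‖k x‖ ≤ M := by
  let F : ZeroAtInftyContinuousMap ℝ ℂ := ⟨⟨k, hk⟩, hl⟩
  obtain ⟨M, hM⟩ := isBounded_iff_forall_norm_le.1 F.isBounded_range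
  exact ⟨M, fun x => hM _ ⟨x, rfl⟩⟩

lemma KK_bd {k : ℝ → ℂ} {M : ℝ} (h : ∀ x, ‖k x‖ ≤ M) (x t : ℝ) : ‖KK k x t‖ ≤ 4 * M := by
  unfold KK
  have h1 := norm_sub_le (k (x + t) + k (x - t) + k (-x + t)) (k (-x - t))
  have h2 := norm_add₃_le (a := k (x + t)) (b := k (x - t)) (c := k (-x + t))
  linarith [h (x+t), h (x-t), h (-x+t), h (-x-t)]
lemma KL_bd {k : ℝ → ℂ} {M : ℝ} (h : ∀ x, ‖k x‖ ≤ M) (x t : ℝ) : ‖KL k x t‖ ≤ 4 * M := by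
  unfold KL
  have h1 := norm_add_le (k (x + t) + k (x - t) - k (-x + t)) (k (-x - t))
  have h2 := norm_sub_le (k (x + t) + k (x - t)) (k (-x + t))
  have h3 := norm_add_le (k (x + t)) (k (x - t))
  linarith [h (x+t), h (x-t), h (-x+t), h (-x-t)]

/-- cas function -/
noncomputable def cas (y x : ℝ) : ℂ := ((Real.cos (x * y) + Real.sin (x * y) : ℝ) : ℂ)
noncomputable def cas' (y x : ℝ) : ℂ := ((y * (Real.cos (x * y) - Real.sin (x * y)) : ℝ) : ℂ)

lemma cas_deriv (y x : ℝ) : HasDerivAt (cas y) (cas' y x) x := by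
  have hm : HasDerivAt (fun x : ℝ => x * y) y x := by simpa using (hasDerivAt_id x).mul_const y
  have := (hm.cos.add hm.sin).ofReal_comp
  refine HasDerivAt.congr_deriv this ?_
  simp [cas']; ring
lemma cas'_deriv (y x : ℝ) : HasDerivAt (cas' y) (-(y:ℂ)^2 * cas y x) x := by
  have hm : HasDerivAt (fun x : ℝ => x * y) y x := by simpa using (hasDerivAt_id x).mul_const y
  have := ((hm.cos.sub hm.sin).const_mul y).ofReal_comp
  refine HasDerivAt.congr_deriv this ?_
  simp [cas]; ring
lemma cas_cont (y : ℝ) : Continuous (cas y) := by unfold cas; fun_prop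
lemma cas'_cont (y : ℝ) : Continuous (cas' y) := by unfold cas'; fun_prop
lemma cas_bd (y x : ℝ) : ‖cas y x‖ ≤ 2 := by
  unfold cas
  rw [Complex.norm_real, Real.norm_eq_abs, abs_le]
  constructor <;> linarith [Real.neg_one_le_cos (x*y), Real.cos_le_one (x*y),
    Real.neg_one_le_sin (x*y), Real.sin_le_one (x*y)]
lemma cas'_bd (y x : ℝ) : ‖cas' y x‖ ≤ |y| * 2 := by
  unfold cas'
  rw [Complex.norm_real, Real.norm_eq_abs, abs_mul]
  refine mul_le_mul_of_nonneg_left ?_ (abs_nonneg y)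
  rw [abs_le]
  constructor <;> linarith [Real.neg_one_le_cos (x*y), Real.cos_le_one (x*y),
    Real.neg_one_le_sin (x*y), Real.sin_le_one (x*y)]

lemma mul_cas_int {u : ℝ → ℂ} (hu : Integrable u) (y : ℝ) :
    Integrable (fun x => u x * cas y x) :=
  hu.mul_bdd (cas_cont y).aestronglyMeasurable (Eventually.of_forall (cas_bd y))
lemma mul_cas'_int {u : ℝ → ℂ} (hu : Integrable u) (y : ℝ) :
    Integrable (fun x => u x * cas' y x) :=
  hu.mul_bdd (cas'_cont y).aestronglyMeasurable (Eventually.of_forall (cas'_bd y))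

lemma byparts {u u' u'' : ℝ → ℂ} (h1 : ∀ x, HasDerivAt u (u' x) x)
    (h2 : ∀ x, HasDerivAt u' (u'' x) x) (i0 : Integrable u) (i1 : Integrable u')
    (i2 : Integrable u'') (y : ℝ) :
    ∫ x, u'' x * cas y x = -(y:ℂ)^2 * ∫ x, u x * cas y x := by
  have e1 : ∫ x, u' x * cas' y x = - ∫ x, u'' x * cas y x :=
    integral_mul_deriv_eq_deriv_mul_of_integrable (fun x _ => h2 x) (fun x _ => cas_deriv y x)
      (mul_cas'_int i1 y) (mul_cas_int i2 y) (mul_cas_int i1 y)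
  have e2 : ∫ x, u x * (-(y:ℂ)^2 * cas y x) = - ∫ x, u' x * cas' y x := by
    refine integral_mul_deriv_eq_deriv_mul_of_integrable (fun x _ => h1 x)
      (fun x _ => cas'_deriv y x) ?_ (mul_cas'_int i1 y) (mul_cas'_int i0 y)
    refine ((mul_cas_int i0 y).const_mul (-(y:ℂ)^2)).congr (Eventually.of_forall fun x => ?_)
    simp only [Pi.mul_apply]; ring
  rw [e1, neg_neg] at e2
  rw [← e2, ← integral_const_mul]
  congr 1; ext x; ring

lemma fub (f k : ℝ → ℂ) (hf : Integrable f) (hk : Integrable k) (y : ℝ) :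
    ∫ x, (∫ t, f t * KK k x t) * cas y x = ∫ t, f t * ∫ x, KK k x t * cas y x := by
  have hp : Integrable (fun p : ℝ × ℝ => (f p.2 * KK k p.1 p.2) * cas y p.1)
      (volume.prod volume) :=
    (KK_int_prod f k hf hk).mul_bdd ((cas_cont y).comp continuous_fst).aestronglyMeasurable
      (Eventually.of_forall fun p => cas_bd y p.1)
  have := integral_integral_swap (f := fun x t => (f t * KK k x t) * cas y x) hp
  simp_rw [← integral_const_mul, ← integral_mul_const]
  rw [this]
  simp_rw [mul_assoc]

lemma main_ae (g : ℝ → ℂ) (hg2 : ContDiff ℝ 2 g)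
    (hg'' : Integrable (deriv (deriv g)))
    (hlim : Tendsto g (cocompact ℝ) (nhds 0))
    (hlim' : Tendsto (deriv g) (cocompact ℝ) (nhds 0))
    (f : ℝ → ℂ) (hf : Integrable f) :
    ∀ᵐ x, deriv (deriv (fun x => ∫ t, f t * KK g x t)) x
      = ∫ t, f t * KK (deriv (deriv g)) x t := by
  have hd : Differentiable ℝ g := hg2.differentiable (by norm_num)
  have hg1 : ContDiff ℝ 1 (deriv g) := (contDiff_succ_iff_deriv (n := 1).1 hg2).2.2
  have hd1 : Differentiable ℝ (deriv g) := hg1.differentiable (by norm_num)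
  have hc2 : Continuous (deriv (deriv g)) := hg1.continuous_deriv (by norm_num)
  obtain ⟨M, hM⟩ := bdd_of_lim hd.continuous hlim
  obtain ⟨M', hM'⟩ := bdd_of_lim hd1.continuous hlim'
  have iL : ∀ x, Integrable (fun t => f t * KL (deriv g) x t) := fun x =>
    hf.mul_bdd ((KL_cont hd1.continuous).comp (Continuous.prodMk_right x)).aestronglyMeasurable
      (Eventually.of_forall fun t => KL_bd hM' x t)
  have mK : ∀ x, AEStronglyMeasurable (fun t => f t * KK g x t) volume := fun x =>
    hf.aestronglyMeasurable.mul
      ((KK_cont hd.continuous).comp (Continuous.prodMk_right x)).aestronglyMeasurable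
  have iK : ∀ x, Integrable (fun t => f t * KK g x t) := fun x =>
    hf.mul_bdd ((KK_cont hd.continuous).comp (Continuous.prodMk_right x)).aestronglyMeasurable
      (Eventually.of_forall fun t => KK_bd hM x t)
  have D1 : deriv (fun x => ∫ t, f t * KK g x t) = fun x => ∫ t, f t * KL (deriv g) x t := by
    ext x
    refine (hasDerivAt_integral_of_dominated_loc_of_deriv_le (F := fun x t => f t * KK g x t)
      (F' := fun x t => f t * KL (deriv g) x t) (s := Set.univ)
      (bound := fun t => ‖f t‖ * (4 * M')) Filter.univ_mem
      (Eventually.of_forall mK) (iK x) (iL x).aestronglyMeasurable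
      (Eventually.of_forall fun t x _ => ?_) (hf.norm.mul_const _)
      (Eventually.of_forall fun t x _ => (KK_deriv hd x t).const_mul (f t))).2.deriv
    rw [norm_mul]
    exact mul_le_mul_of_nonneg_left (KL_bd hM' x t) (norm_nonneg _)
  rw [D1]
  have hP := KK_int_prod f _ hf hg''
  have hI : Integrable (fun x => ∫ t, f t * KK (deriv (deriv g)) x t) := hP.integral_prod_left
  have D2 : (fun x => ∫ t, f t * KL (deriv g) x t) = fun x =>
      (∫ s in (0:ℝ)..x, ∫ t, f t * KK (deriv (deriv g)) s t) + ∫ t, f t * KL (deriv g) 0 t := by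
    ext x
    rw [intervalIntegral_integral_swap, ← integral_add]
    · congr 1; ext t
      rw [intervalIntegral.integral_const_mul,
        intervalIntegral.integral_eq_sub_of_hasDerivAt (fun s _ => KL_deriv hd1 s t)
          (((KK_cont hc2).comp (Continuous.prodMk_left t)).intervalIntegrable _ _)]
      ring
    · have : ∀ t, ∫ s in (0:ℝ)..x, f t * KK (deriv (deriv g)) s t
          = f t * KL (deriv g) x t - f t * KL (deriv g) 0 t := by
        intro t
        rw [intervalIntegral.integral_const_mul,
        intervalIntegral.integral_eq_sub_of_hasDerivAt (fun s _ => KL_deriv hd1 s t)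
          (((KK_cont hc2).comp (Continuous.prodMk_left t)).intervalIntegrable _ _)]
        ring
      simp_rw [this]
      exact (iL x).sub (iL 0)
    · exact iL 0
    · exact hP.mono_measure (Measure.prod_mono Measure.restrict_le_self le_rfl)
  rw [D2]
  filter_upwards [LocallyIntegrable.ae_hasDerivAt_integral hI.locallyIntegrable] with x hx
  exact ((hx 0).add_const _).deriv

theorem stmt14 (g : ℝ → ℂ) (hg2 : ContDiff ℝ 2 g)
    (hg : Integrable g) (hg' : Integrable (deriv g)) (hg'' : Integrable (deriv (deriv g)))
    (hlim : Tendsto g (cocompact ℝ) (nhds 0))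
    (hlim' : Tendsto (deriv g) (cocompact ℝ) (nhds 0))
    (f : ℝ → ℂ) (hf : Integrable f) (y : ℝ) :
    hartley (fun x => Hconv f g x - deriv (deriv (Hconv f g)) x) y =
      ((1 + y ^ 2 : ℝ) : ℂ) * hartley (Hconv f g) y := by
  have hd : Differentiable ℝ g := hg2.differentiable (by norm_num)
  have hg1 : ContDiff ℝ 1 (deriv g) := (contDiff_succ_iff_deriv (n := 1).1 hg2).2.2
  have hd1 : Differentiable ℝ (deriv g) := hg1.differentiable (by norm_num)
  have hae := main_ae g hg2 hg'' hlim hlim' f hf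
  set c : ℂ := (1 / (2 * Real.sqrt (2 * Real.pi)) : ℂ) with hc
  have hH : Hconv f g = fun x => c * ∫ t, f t * KK g x t := rfl
  have hI0 : Integrable (fun x => ∫ t, f t * KK g x t) :=
    (KK_int_prod f g hf hg).integral_prod_left
  have hI2 : Integrable (fun x => ∫ t, f t * KK (deriv (deriv g)) x t) :=
    (KK_int_prod f _ hf hg'').integral_prod_left
  have key : ∫ x, (∫ t, f t * KK (deriv (deriv g)) x t) * cas y x
      = -(y:ℂ)^2 * ∫ x, (∫ t, f t * KK g x t) * cas y x := by
    rw [fub f _ hf hg'', fub f _ hf hg, ← integral_const_mul]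
    congr 1; ext t
    rw [byparts (fun x => KK_deriv hd x t) (fun x => KL_deriv hd1 x t) (KK_int hg t)
      (KL_int hg' t) (KK_int hg'' t) y]
    ring
  have L : ∫ x, (Hconv f g x - deriv (deriv (Hconv f g)) x) * cas y x
      = ((1 + y ^ 2 : ℝ) : ℂ) * ∫ x, Hconv f g x * cas y x := by
    have : ∫ x, (Hconv f g x - deriv (deriv (Hconv f g)) x) * cas y x
      = ∫ x, (c * ((∫ t, f t * KK g x t) * cas y x)
          - c * ((∫ t, f t * KK (deriv (deriv g)) x t) * cas y x)) := by
      refine integral_congr_ae ?_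
      filter_upwards [hae] with x hx
      have hcd : ∀ F : ℝ → ℂ, deriv (fun x => c * F x) = fun x => c * deriv F x := by
        intro F; ext x; exact deriv_fun_const_smul_field c F
      rw [← hx, hH, hcd, hcd]
      ring
    rw [this, integral_sub ((mul_cas_int hI0 y).const_mul c) ((mul_cas_int hI2 y).const_mul c),
      integral_const_mul, integral_const_mul, key, hH]
    simp_rw [mul_assoc]
    rw [integral_const_mul]
    push_cast
    ring
  unfold hartley
  change _ * (∫ x, (Hconv f g x - deriv (deriv (Hconv f g)) x) * cas y x)
    = _ * (_ * ∫ x, Hconv f g x * cas y x)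
  rw [L]; ring
end
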